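/- Let S and A be nonempty finite sets. For every θ, u, v ∈ ℝ^{S×A} and every (s,a) ∈ S×A, the second directional derivative of θ ↦ π_θ(a|s) satisfies |d²π_θ[u,v](a|s)| ≤ 8·π_θ(a|s)·‖u‖_∞·‖v‖_∞. -/

import Mathlib

open scoped BigOperators

/-- The softmax policy `π_θ(a|s) = exp θ(s,a) / Σ_{a'} exp θ(s,a')`. -/
noncomputable def softmax {S A : Type*} [Fintype A] (θ : S × A → ℝ) (s : S) (a : A) : ℝ :=
  Real.exp (θ (s, a)) / ∑ a' : A, Real.exp (θ (s, a'))

/-!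
For a function `f` on actions let `f̃ = f - 𝔼 f` be its centering under `π_θ(·|s)`. Since the
gradient of log-sum-exp is the softmax, `π_θ(a|s) = exp (θ(s,a) - log Σ_b exp θ(s,b))` has
logarithmic derivative `ũ(a)` in the direction `u`. Differentiating `π_θ(a|s) ṽ(a)` once more, and
using `𝔼 (ũ v) = 𝔼 (ũ ṽ)`, yields `d²π_θ[u,v](a|s) = π_θ(a|s) (ũ(a) ṽ(a) - 𝔼 (ũ ṽ))`, the centering
of `ũ ṽ`. Each of the three centerings at most doubles the sup norm, whence the constant `8 = 2³`.
-/

section Mean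

variable {S A E : Type*} [Fintype A]

lemma softmax_nonneg (θ : S × A → ℝ) (s : S) (a : A) : 0 ≤ softmax θ s a := by
  unfold softmax
  positivity

lemma sum_exp_pos [Nonempty A] (f : A → ℝ) : 0 < ∑ a, Real.exp (f a) :=
  Finset.sum_pos (fun _ _ => Real.exp_pos _) Finset.univ_nonempty

lemma sum_softmax [Nonempty A] (θ : S × A → ℝ) (s : S) : ∑ a, softmax θ s a = 1 := by
  simp only [softmax, ← Finset.sum_div]
  exact div_self (sum_exp_pos _).ne'

lemma softmax_eq_exp_sub_log [Nonempty A] (θ : S × A → ℝ) (s : S) (a : A) :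
    softmax θ s a = Real.exp (θ (s, a) - Real.log (∑ b, Real.exp (θ (s, b)))) := by
  rw [Real.exp_sub, Real.exp_log (sum_exp_pos _), softmax]

/-- The expectation of `f` under the policy `π_θ(·|s)`. The values of `f` lie in an arbitrary real
vector space, so that derivatives of the policy, which are functionals, can be averaged too. -/
noncomputable def softmaxMean [AddCommMonoid E] [Module ℝ E] (θ : S × A → ℝ) (s : S)
    (f : A → E) : E :=
  ∑ b, softmax θ s b • f b

/-- The centering of `f` with respect to the policy `π_θ(·|s)`; it is the advantage function when
`f` is a table of action values. -/
noncomputable def softmaxCenter [AddCommGroup E] [Module ℝ E] (θ : S × A → ℝ) (s : S)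
    (f : A → E) (a : A) : E :=
  f a - softmaxMean θ s f

section Algebra

variable [AddCommGroup E] [Module ℝ E]

lemma softmaxMean_const [Nonempty A] (θ : S × A → ℝ) (s : S) (c : E) :
    softmaxMean θ s (fun _ => c) = c := by
  rw [softmaxMean, ← Finset.sum_smul, sum_softmax, one_smul]

lemma softmaxMean_sub (θ : S × A → ℝ) (s : S) (f g : A → E) :
    softmaxMean θ s (fun b => f b - g b) = softmaxMean θ s f - softmaxMean θ s g := by
  simp only [softmaxMean, smul_sub, Finset.sum_sub_distrib]

lemma softmaxMean_smul_const (θ : S × A → ℝ) (s : S) (f : A → ℝ) (c : E) :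
    softmaxMean θ s (fun b => f b • c) = softmaxMean θ s f • c := by
  simp only [softmaxMean, Finset.sum_smul, smul_assoc]

lemma softmaxMean_softmaxCenter [Nonempty A] (θ : S × A → ℝ) (s : S) (f : A → E) :
    softmaxMean θ s (softmaxCenter θ s f) = 0 := by
  unfold softmaxCenter
  rw [softmaxMean_sub, softmaxMean_const, sub_self]

lemma softmaxMean_smul_softmaxCenter (θ : S × A → ℝ) (s : S) {h : A → ℝ}
    (hh : softmaxMean θ s h = 0) (f : A → E) :
    softmaxMean θ s (fun b => h b • softmaxCenter θ s f b) =
      softmaxMean θ s (fun b => h b • f b) := by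
  simp only [softmaxCenter, smul_sub, softmaxMean_sub, softmaxMean_smul_const, hh, zero_smul,
    sub_zero]

end Algebra

section Norm

variable [SeminormedAddCommGroup E] [NormedSpace ℝ E] [Nonempty A]

lemma norm_softmaxMean_le (θ : S × A → ℝ) (s : S) {f : A → E} {C : ℝ} (hf : ∀ b, ‖f b‖ ≤ C) :
    ‖softmaxMean θ s f‖ ≤ C := by
  have hmem : softmaxMean θ s f ∈ Metric.closedBall 0 C :=
    (convex_closedBall 0 C).sum_mem (fun b _ => softmax_nonneg θ s b) (sum_softmax θ s)
      fun b _ => mem_closedBall_zero_iff.2 (hf b)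
  exact mem_closedBall_zero_iff.1 hmem

lemma norm_softmaxCenter_le (θ : S × A → ℝ) (s : S) {f : A → E} {C : ℝ} (hf : ∀ b, ‖f b‖ ≤ C)
    (a : A) : ‖softmaxCenter θ s f a‖ ≤ 2 * C :=
  (norm_sub_le_of_le (hf a) (norm_softmaxMean_le θ s hf)).trans_eq (two_mul C).symm

end Norm

section Apply

variable {F G : Type*} [AddCommGroup F] [Module ℝ F] [TopologicalSpace F]
  [AddCommGroup G] [Module ℝ G] [TopologicalSpace G] [IsTopologicalAddGroup G]
  [ContinuousConstSMul ℝ G]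

lemma softmaxMean_apply (θ : S × A → ℝ) (s : S) (L : A → F →L[ℝ] G) (x : F) :
    softmaxMean θ s L x = softmaxMean θ s (fun b => L b x) := by
  simp only [softmaxMean, sum_apply, smul_apply]

lemma softmaxCenter_apply (θ : S × A → ℝ) (s : S) (L : A → F →L[ℝ] G) (a : A) (x : F) :
    softmaxCenter θ s L a x = softmaxCenter θ s (fun b => L b x) a := by
  simp only [softmaxCenter, sub_apply, softmaxMean_apply]

end Apply

end Mean

/-- The evaluation functional `θ ↦ θ(s,a)`, in terms of which derivatives of the policy are
expressed. -/
def paramEval {S A : Type*} (s : S) (a : A) : (S × A → ℝ) →L[ℝ] ℝ :=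
  ContinuousLinearMap.proj (s, a)

lemma paramEval_apply {S A : Type*} (s : S) (a : A) (θ : S × A → ℝ) :
    paramEval s a θ = θ (s, a) :=
  rfl

section Derivative

variable {S A E : Type*} [Fintype A] [Nonempty A]
  [NormedAddCommGroup E] [NormedSpace ℝ E]

lemma hasFDerivAt_log_sum_exp [Finite S] (θ : S × A → ℝ) (s : S) :
    HasFDerivAt (fun θ' : S × A → ℝ => Real.log (∑ b, Real.exp (θ' (s, b))))
      (softmaxMean θ s (paramEval s)) θ := by
  have := Fintype.ofFinite S
  have hsum : HasFDerivAt (fun θ' : S × A → ℝ => ∑ b, Real.exp (θ' (s, b)))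
      (∑ b, Real.exp (θ (s, b)) • paramEval s b) θ :=
    HasFDerivAt.fun_sum fun b _ => (paramEval s b).hasFDerivAt.exp
  refine (hsum.log (sum_exp_pos _).ne').congr_fderiv ?_
  simp only [softmaxMean, softmax, Finset.smul_sum, smul_smul, div_eq_inv_mul]

lemma hasFDerivAt_softmax [Finite S] (θ : S × A → ℝ) (s : S) (a : A) :
    HasFDerivAt (fun θ' => softmax θ' s a)
      (softmax θ s a • softmaxCenter θ s (paramEval s) a) θ := by
  have := Fintype.ofFinite S
  simp only [softmax_eq_exp_sub_log]
  exact ((paramEval s a).hasFDerivAt.sub (hasFDerivAt_log_sum_exp θ s)).exp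

lemma hasFDerivAt_softmaxMean [Finite S] (θ : S × A → ℝ) (s : S) (f : A → E) :
    HasFDerivAt (fun θ' => softmaxMean θ' s f)
      (softmaxMean θ s fun b => (softmaxCenter θ s (paramEval s) b).smulRight (f b)) θ := by
  have := Fintype.ofFinite S
  refine (HasFDerivAt.fun_sum fun b _ =>
    (hasFDerivAt_softmax θ s b).smul_const (f b)).congr_fderiv ?_
  ext u
  simp only [softmaxMean, sum_apply, ContinuousLinearMap.smulRight_apply, smul_apply, smul_eq_mul,
    smul_smul]

lemma hasFDerivAt_fderiv_softmax [Finite S] (θ : S × A → ℝ) (s : S) (a : A) :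
    HasFDerivAt (fderiv ℝ fun θ' => softmax θ' s a)
      (softmax θ s a •
        softmaxCenter θ s (fun b => (softmaxCenter θ s (paramEval s) b).smulRight
          (softmaxCenter θ s (paramEval s) b)) a) θ := by
  have := Fintype.ofFinite S
  have hfderiv : fderiv ℝ (fun θ' => softmax θ' s a) =
      fun θ' => softmax θ' s a • softmaxCenter θ' s (paramEval s) a :=
    funext fun θ' => (hasFDerivAt_softmax θ' s a).fderiv
  have hprod := (hasFDerivAt_softmax θ s a).fun_smul
    ((hasFDerivAt_softmaxMean θ s (paramEval s)).const_sub (paramEval s a))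
  rw [hfderiv]
  refine hprod.congr_fderiv (ContinuousLinearMap.ext fun u => ?_)
  have hcov := softmaxMean_smul_softmaxCenter θ s
    (softmaxMean_softmaxCenter θ s fun c => u (s, c)) (paramEval s)
  simp only [add_apply, smul_apply, neg_apply, ContinuousLinearMap.smulRight_apply,
    softmaxMean_apply, softmaxCenter_apply, paramEval_apply]
  rw [← hcov]
  simp only [softmaxCenter]
  module

lemma iteratedFDeriv_two_softmax [Fintype S] (θ u v : S × A → ℝ) (s : S) (a : A) :
    iteratedFDeriv ℝ 2 (fun θ' => softmax θ' s a) θ ![u, v] =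
      softmax θ s a * softmaxCenter θ s (fun b =>
        softmaxCenter θ s (fun c => u (s, c)) b * softmaxCenter θ s (fun c => v (s, c)) b) a := by
  rw [iteratedFDeriv_two_apply, (hasFDerivAt_fderiv_softmax θ s a).fderiv]
  simp only [smul_apply, softmaxCenter_apply, ContinuousLinearMap.smulRight_apply, paramEval_apply,
    smul_eq_mul, Matrix.cons_val_zero, Matrix.cons_val_one]

end Derivative

/-- Bound for the second directional derivative of the softmax policy.
The sup norm `‖u‖_∞` is the norm of the Pi type `S × A → ℝ`. -/
theorem stmt4 {S A : Type*} [Fintype S] [Fintype A] [Nonempty S] [Nonempty A]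
    (θ u v : S × A → ℝ) (s : S) (a : A) :
    |iteratedFDeriv ℝ 2 (fun θ' => softmax θ' s a) θ ![u, v]| ≤
      8 * softmax θ s a * ‖u‖ * ‖v‖ := by
  have hcenter (w : S × A → ℝ) (b : A) : ‖softmaxCenter θ s (fun c => w (s, c)) b‖ ≤ 2 * ‖w‖ :=
    norm_softmaxCenter_le θ s (fun c => norm_le_pi_norm w (s, c)) b
  have hprod (b : A) : ‖softmaxCenter θ s (fun c => u (s, c)) b *
      softmaxCenter θ s (fun c => v (s, c)) b‖ ≤ 2 * ‖u‖ * (2 * ‖v‖) :=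
    norm_mul_le_of_le (hcenter u b) (hcenter v b)
  rw [iteratedFDeriv_two_softmax, abs_mul, abs_of_nonneg (softmax_nonneg θ s a)]
  calc softmax θ s a * _
      ≤ softmax θ s a * (2 * (2 * ‖u‖ * (2 * ‖v‖))) :=
        mul_le_mul_of_nonneg_left (norm_softmaxCenter_le θ s hprod a) (softmax_nonneg θ s a)
    _ = 8 * softmax θ s a * ‖u‖ * ‖v‖ := by ring
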